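/- arXiv:2409.12107 — 3 statements merged into one kernel-verified Lean document; each statement's English description precedes it below -/
import Mathlib

section
/- Let n > 1 and let P be a matrix with nonnegative real entries indexed by the permutations of Fin n such that P π π > 0 for every permutation π, and P π σ > 0 whenever σ = (Equiv.swap i j) * π for some pair of distinct indices i, j : Fin n. Then for every t ≥ n − 1 and all permutations π, σ, the entry (P^t) π σ is strictly positive. -/
/-- Let `n > 1` and let `P` be a nonnegative matrix indexed by
permutations of `Fin n` with `P π π > 0` for all `π`, and `P π σ > 0` whenever
`σ = (Equiv.swap i j) * π` for distinct `i j : Fin n`. Then for every `t ≥ n - 1`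
and all permutations `π σ`, the entry `(P^t) π σ` is strictly positive. -/
theorem transposition_walk_power_pos
    (n : ℕ) (hn : 1 < n)
    (P : Matrix (Equiv.Perm (Fin n)) (Equiv.Perm (Fin n)) ℝ)
    (hnonneg : ∀ π σ, 0 ≤ P π σ)
    (hlazy : ∀ π, 0 < P π π)
    (hswap : ∀ π σ : Equiv.Perm (Fin n),
      (∃ i j : Fin n, i ≠ j ∧ σ = Equiv.swap i j * π) → 0 < P π σ) :
    ∀ t : ℕ, n - 1 ≤ t → ∀ π σ : Equiv.Perm (Fin n), 0 < (P ^ t) π σ := by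
  have hnn : ∀ (t : ℕ) (π σ : Equiv.Perm (Fin n)), 0 ≤ (P ^ t) π σ := by
    intro t
    induction t with
    | zero =>
      intro π σ
      rw [pow_zero, Matrix.one_apply]
      split_ifs <;> norm_num
    | succ t ih =>
      intro π σ
      rw [pow_succ, Matrix.mul_apply]
      exact Finset.sum_nonneg fun τ _ => mul_nonneg (ih π τ) (hnonneg τ σ)
  have key : ∀ (t : ℕ) (π σ : Equiv.Perm (Fin n)),
      (σ * π⁻¹).support.card ≤ t + 1 → 0 < (P ^ t) π σ := by
    intro t
    induction t with
    | zero =>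
      intro π σ h
      have h1 : σ * π⁻¹ = 1 := Equiv.Perm.card_support_le_one.mp h
      have h2 : σ = π := mul_inv_eq_one.mp h1
      subst h2
      simp
    | succ t ih =>
      intro π σ h
      rw [pow_succ, Matrix.mul_apply]
      have step : ∀ τ, 0 < (P ^ t) π τ → 0 < P τ σ →
          0 < ∑ τ, (P ^ t) π τ * P τ σ := fun τ h1 h2 =>
        Finset.sum_pos' (fun τ _ => mul_nonneg (hnn t π τ) (hnonneg τ σ))
          ⟨τ, Finset.mem_univ _, mul_pos h1 h2⟩
      by_cases hf : σ * π⁻¹ = 1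
      · refine step σ (ih π σ ?_) (hlazy σ)
        simp [hf]
      · obtain ⟨x, hx⟩ : ∃ x, (σ * π⁻¹) x ≠ x := by
          by_contra hc
          push Not at hc
          exact hf (Equiv.ext hc)
        refine step (Equiv.swap x ((σ * π⁻¹) x) * σ) (ih _ _ ?_)
          (hswap _ _ ⟨x, (σ * π⁻¹) x, hx.symm, ?_⟩)
        · have := Equiv.Perm.card_support_swap_mul hx
          rw [mul_assoc]
          omega
        · rw [← mul_assoc, Equiv.swap_mul_self, one_mul]
  intro t ht π σ
  apply key
  have h := Finset.card_le_univ (σ * π⁻¹).support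
  rw [Fintype.card_fin] at h
  omega
end

section
/- Let S be a nonempty finite type and let P be a row-stochastic matrix indexed by S (all entries nonnegative and each row summing to 1). If P is irreducible, i.e., for all i, j : S there exists t ≥ 1 with (P^t) i j > 0, then there exists a unique probability distribution μ : S → ℝ (with μ i ≥ 0 for all i and ∑ i, μ i = 1) satisfying μ P = μ, i.e., ∑ i, μ i * P i j = μ j for every j : S. This μ is called the stationary distribution of P. -/
theorem aux_abs {S : Type*} [Fintype S] (P : Matrix S S ℝ)
    (hnonneg : ∀ i j, 0 ≤ P i j) (hrow : ∀ i, ∑ j, P i j = 1)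
    (v : S → ℝ) (hv : ∀ j, ∑ i, v i * P i j = v j) :
    ∀ j, ∑ i, |v i| * P i j = |v j| := by
  have hle : ∀ j ∈ Finset.univ, |v j| ≤ ∑ i, |v i| * P i j := by
    intro j _
    calc |v j| = |∑ i, v i * P i j| := by rw [hv]
      _ ≤ ∑ i, |v i * P i j| := Finset.abs_sum_le_sum_abs _ _
      _ = ∑ i, |v i| * P i j :=
        Finset.sum_congr rfl fun i _ => by rw [abs_mul, abs_of_nonneg (hnonneg i j)]
  have hsum : ∑ j, |v j| = ∑ j, ∑ i, |v i| * P i j := by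
    rw [Finset.sum_comm]
    refine Finset.sum_congr rfl fun i _ => ?_
    rw [← Finset.mul_sum, hrow, mul_one]
  intro j
  exact (((Finset.sum_eq_sum_iff_of_le hle).1 hsum) j (Finset.mem_univ j)).symm

theorem aux_zero {S : Type*} [Fintype S] [DecidableEq S] (P : Matrix S S ℝ)
    (hnonneg : ∀ i j, 0 ≤ P i j)
    (hirr : ∀ i j : S, ∃ t : ℕ, 1 ≤ t ∧ 0 < (P ^ t) i j)
    (v : S → ℝ) (hv : ∀ j, ∑ i, v i * P i j = v j) (h0 : ∀ i, 0 ≤ v i)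
    (k : S) (hk : v k = 0) : ∀ i, v i = 0 := by
  have hP : Matrix.vecMul v P = v := funext hv
  have hpow : ∀ t : ℕ, Matrix.vecMul v (P ^ t) = v := by
    intro t
    induction t with
    | zero => simp
    | succ t ih => rw [pow_succ, ← Matrix.vecMul_vecMul, ih, hP]
  have hpn : ∀ t : ℕ, ∀ i j, 0 ≤ (P ^ t) i j := by
    intro t
    induction t with
    | zero =>
      intro i j
      rw [pow_zero, Matrix.one_apply]
      split_ifs <;> norm_num
    | succ t ih =>
      intro i j
      rw [pow_succ, Matrix.mul_apply]
      exact Finset.sum_nonneg fun l _ => mul_nonneg (ih i l) (hnonneg l j)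
  intro i
  obtain ⟨t, -, ht⟩ := hirr i k
  have h1 : ∑ l, v l * (P ^ t) l k = 0 := by
    rw [← hk]; exact congrFun (hpow t) k
  have h2 := (Finset.sum_eq_zero_iff_of_nonneg
    (fun l _ => mul_nonneg (h0 l) (hpn t l k))).1 h1 i (Finset.mem_univ i)
  exact (mul_eq_zero.1 h2).resolve_right ht.ne'

/-- A row-stochastic irreducible matrix over a nonempty finite type
has a unique stationary distribution. -/
theorem exists_unique_stationary_distribution
    (S : Type*) [Fintype S] [DecidableEq S] [Nonempty S]
    (P : Matrix S S ℝ)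
    (hnonneg : ∀ i j, 0 ≤ P i j)
    (hrow : ∀ i, ∑ j, P i j = 1)
    (hirr : ∀ i j : S, ∃ t : ℕ, 1 ≤ t ∧ 0 < (P ^ t) i j) :
    ∃! μ : S → ℝ,
      (∀ i, 0 ≤ μ i) ∧ (∑ i, μ i = 1) ∧ (∀ j, ∑ i, μ i * P i j = μ j) := by
  have hdet : (P - 1).det = 0 := by
    refine Matrix.exists_mulVec_eq_zero_iff.1 ⟨fun _ => 1, ?_, ?_⟩
    · intro h
      obtain ⟨i⟩ := ‹Nonempty S›
      exact one_ne_zero (congrFun h i)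
    · rw [Matrix.sub_mulVec, Matrix.one_mulVec]
      funext i
      simp [Matrix.mulVec, dotProduct, hrow]
  obtain ⟨v, hv0, hv⟩ := Matrix.exists_vecMul_eq_zero_iff.2 hdet
  rw [Matrix.vecMul_sub, Matrix.vecMul_one, sub_eq_zero] at hv
  have habs := aux_abs P hnonneg hrow v (fun j => congrFun hv j)
  have hpos : 0 < ∑ i, |v i| := by
    obtain ⟨i, hi⟩ := Function.ne_iff.1 hv0
    exact Finset.sum_pos' (fun i _ => abs_nonneg _) ⟨i, Finset.mem_univ i, abs_pos.2 hi⟩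
  refine existsUnique_of_exists_of_unique
    ⟨fun i => |v i| / ∑ i, |v i|, fun i => by positivity, ?_, ?_⟩ ?_
  · rw [← Finset.sum_div, div_self hpos.ne']
  · intro j
    beta_reduce
    rw [← habs j, Finset.sum_div]
    exact Finset.sum_congr rfl fun i _ => by ring
  · rintro μ ν ⟨-, hμ1, hμ⟩ ⟨-, hν1, hν⟩
    have hd : ∀ j, ∑ i, (μ i - ν i) * P i j = μ j - ν j := by
      intro j
      simp only [sub_mul, Finset.sum_sub_distrib, hμ, hν]
    have hda := aux_abs P hnonneg hrow (fun i => μ i - ν i) hd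
    have hs : ∑ i, (μ i - ν i) = 0 := by
      rw [Finset.sum_sub_distrib, hμ1, hν1, sub_self]
    obtain ⟨k, -, hk⟩ := Finset.exists_le_of_sum_le (s := Finset.univ)
      (f := fun i => μ i - ν i) (g := fun _ => (0 : ℝ)) Finset.univ_nonempty
      (by simpa using hs.le)
    have hz := aux_zero P hnonneg hirr (fun i => (μ i - ν i) + |μ i - ν i|)
      (by
        intro j
        simp only [add_mul, Finset.sum_add_distrib]
        rw [hd j, hda j])
      (fun i => by have := neg_abs_le (μ i - ν i); linarith)
      k (by rw [abs_of_nonpos hk]; ring)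
    have hle : ∀ i ∈ Finset.univ, μ i - ν i ≤ 0 := by
      intro i _
      have := hz i
      have := abs_nonneg (μ i - ν i)
      linarith
    funext i
    exact sub_eq_zero.1 ((Finset.sum_eq_zero_iff_of_nonpos hle).1 hs i (Finset.mem_univ i))
end

section
/- Let S be a nonempty finite type and let P be a row-stochastic matrix indexed by S (all entries nonnegative and each row summing to 1) that is irreducible (for all i, j : S there exists t ≥ 1 with (P^t) i j > 0) and aperiodic (for every i : S the greatest common divisor of {t ≥ 1 : (P^t) i i > 0} equals 1), and let μ : S → ℝ be its stationary distribution (μ nonnegative, summing to 1, with μ P = μ). Then there exist constants α ∈ (0, 1) and C > 0 such that for every t ∈ ℕ and every i : S, (1/2) * ∑ j, |(P^t) i j − μ j| ≤ C * α^t. -/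
lemma aux_contract {S : Type*} [Fintype S] [Nonempty S] (Q : Matrix S S ℝ) (δ : ℝ) (hδ : 0 ≤ δ)
    (hQ : ∀ i j, δ ≤ Q i j) (hrow : ∀ i, ∑ j, Q i j = 1) (x : S → ℝ) (hx : ∑ i, x i = 0) :
    ∑ j, |∑ i, x i * Q i j| ≤ (1 - δ) * ∑ i, |x i| := by
  have h1 : ∀ j, |∑ i, x i * Q i j| ≤ ∑ i, |x i| * (Q i j - δ) := by
    intro j
    have : ∑ i, x i * Q i j = ∑ i, x i * (Q i j - δ) := by
      simp only [mul_sub, Finset.sum_sub_distrib, ← Finset.sum_mul, hx]; ring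
    rw [this]
    refine (Finset.abs_sum_le_sum_abs _ _).trans (le_of_eq ?_)
    refine Finset.sum_congr rfl fun i _ => ?_
    rw [abs_mul, abs_of_nonneg (sub_nonneg.2 (hQ i j))]
  refine (Finset.sum_le_sum fun j _ => h1 j).trans ?_
  rw [Finset.sum_comm, Finset.mul_sum]
  refine Finset.sum_le_sum fun i _ => ?_
  rw [← Finset.mul_sum, Finset.sum_sub_distrib, hrow, mul_comm]
  refine mul_le_mul_of_nonneg_right ?_ (abs_nonneg _)
  have : (1 : ℝ) ≤ Fintype.card S := by exact_mod_cast Fintype.card_pos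
  simp only [Finset.sum_const, Finset.card_univ, nsmul_eq_mul]
  nlinarith

lemma aux_nonneg {S : Type*} [Fintype S] [DecidableEq S] (P : Matrix S S ℝ)
    (hnonneg : ∀ i j, 0 ≤ P i j) (t : ℕ) : ∀ i j, 0 ≤ (P ^ t) i j := by
  induction t with
  | zero => intro i j; rw [pow_zero, Matrix.one_apply]; split_ifs <;> norm_num
  | succ t ih =>
    intro i j
    rw [pow_succ, Matrix.mul_apply]
    exact Finset.sum_nonneg fun k _ => mul_nonneg (ih i k) (hnonneg k j)

lemma aux_row {S : Type*} [Fintype S] [DecidableEq S] (P : Matrix S S ℝ)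
    (hrow : ∀ i, ∑ j, P i j = 1) (t : ℕ) : ∀ i, ∑ j, (P ^ t) i j = 1 := by
  induction t with
  | zero => intro i; simp [Matrix.one_apply]
  | succ t ih =>
    intro i
    simp only [pow_succ, Matrix.mul_apply]
    rw [Finset.sum_comm]
    simp only [← Finset.mul_sum, hrow, mul_one, ih]

lemma aux_pos {S : Type*} [Fintype S] [DecidableEq S] (P : Matrix S S ℝ)
    (hnonneg : ∀ i j, 0 ≤ P i j) (s t : ℕ) (i k j : S) (h1 : 0 < (P ^ s) i k)
    (h2 : 0 < (P ^ t) k j) : 0 < (P ^ (s + t)) i j := by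
  rw [pow_add, Matrix.mul_apply]
  exact Finset.sum_pos' (fun l _ => mul_nonneg (aux_nonneg P hnonneg s i l)
    (aux_nonneg P hnonneg t l j)) ⟨k, Finset.mem_univ _, mul_pos h1 h2⟩

lemma aux_stat {S : Type*} [Fintype S] [DecidableEq S] (P : Matrix S S ℝ) (μ : S → ℝ)
    (hμstat : ∀ j, ∑ i, μ i * P i j = μ j) (t : ℕ) : ∀ j, ∑ i, μ i * (P ^ t) i j = μ j := by
  induction t with
  | zero => intro j; simp [Matrix.one_apply]
  | succ t ih =>
    intro j
    simp only [pow_succ, Matrix.mul_apply, Finset.mul_sum, ← mul_assoc]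
    rw [Finset.sum_comm]
    simp only [← Finset.sum_mul, ih, hμstat]

lemma aux_loop {S : Type*} [Fintype S] [DecidableEq S] (P : Matrix S S ℝ)
    (hnonneg : ∀ i j, 0 ≤ P i j) (i : S)
    (haper : ∀ d : ℕ, (∀ t : ℕ, 1 ≤ t → 0 < (P ^ t) i i → d ∣ t) → d = 1) :
    ∃ n, ∀ m ≥ n, 0 < (P ^ m) i i := by
  obtain ⟨n, hn⟩ := Nat.exists_mem_closure_of_ge {t : ℕ | 1 ≤ t ∧ 0 < (P ^ t) i i}
  refine ⟨n, fun m hm => ?_⟩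
  have hg : Nat.setGcd {t : ℕ | 1 ≤ t ∧ 0 < (P ^ t) i i} = 1 :=
    haper _ fun t h1 h2 => Nat.setGcd_dvd_of_mem ⟨h1, h2⟩
  have := hn m hm (by rw [hg]; exact one_dvd _)
  clear hm
  induction this using AddSubmonoid.closure_induction with
  | mem x hx => exact hx.2
  | zero => simp
  | add x y _ _ hx hy => exact aux_pos P hnonneg x y i i i hx hy



/-- Convergence Theorem: For a row-stochastic, irreducible and
aperiodic matrix `P` over a nonempty finite type with stationary distribution `μ`,
there are constants `α ∈ (0,1)` and `C > 0` such that for every `t` and every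
state `i`, the total variation distance between the `i`-th row of `P^t` and `μ`
is at most `C * α^t`. -/
theorem convergence_theorem
    (S : Type*) [Fintype S] [DecidableEq S] [Nonempty S]
    (P : Matrix S S ℝ)
    (hnonneg : ∀ i j, 0 ≤ P i j)
    (hrow : ∀ i, ∑ j, P i j = 1)
    (hirr : ∀ i j : S, ∃ t : ℕ, 1 ≤ t ∧ 0 < (P ^ t) i j)
    (haper : ∀ i : S, ∀ d : ℕ,
      (∀ t : ℕ, 1 ≤ t → 0 < (P ^ t) i i → d ∣ t) → d = 1)
    (μ : S → ℝ)
    (hμnonneg : ∀ i, 0 ≤ μ i)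
    (hμsum : ∑ i, μ i = 1)
    (hμstat : ∀ j, ∑ i, μ i * P i j = μ j) :
    ∃ α C : ℝ, α ∈ Set.Ioo (0 : ℝ) 1 ∧ 0 < C ∧
      ∀ t : ℕ, ∀ i : S,
        (1 / 2) * ∑ j, |(P ^ t) i j - μ j| ≤ C * α ^ t := by
  choose n hn using fun i => aux_loop P hnonneg i (haper i)
  choose τ hτ1 hτ using hirr
  obtain ⟨N, hN1, hNpos⟩ : ∃ N : ℕ, 1 ≤ N ∧ ∀ i j, 0 < (P ^ N) i j := by
    refine ⟨∑ i, n i + ∑ i, ∑ j, τ i j + 1, by omega, fun i j => ?_⟩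
    have h1 : n i ≤ ∑ i, n i := Finset.single_le_sum (fun _ _ => Nat.zero_le _) (Finset.mem_univ i)
    have h2 : τ i j ≤ ∑ j, τ i j :=
      Finset.single_le_sum (fun _ _ => Nat.zero_le _) (Finset.mem_univ j)
    have h3 : ∑ j, τ i j ≤ ∑ i, ∑ j, τ i j :=
      Finset.single_le_sum (f := fun i => ∑ j, τ i j) (fun _ _ => Nat.zero_le _)
        (Finset.mem_univ i)
    obtain ⟨m, hm⟩ : ∃ m, ∑ i, n i + ∑ i, ∑ j, τ i j + 1 = m + τ i j :=
      ⟨∑ i, n i + ∑ i, ∑ j, τ i j + 1 - τ i j, by omega⟩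
    rw [hm]
    exact aux_pos P hnonneg m (τ i j) i i j (hn i m (by omega)) (hτ i j)
  obtain ⟨p, hp⟩ := Finite.exists_min (fun q : S × S => (P ^ N) q.1 q.2)
  obtain ⟨δ, hδ0, hδ1, hδ⟩ : ∃ δ : ℝ, 0 < δ ∧ δ ≤ 1 / 2 ∧ ∀ i j, δ ≤ (P ^ N) i j :=
    ⟨min (1 / 2) ((P ^ N) p.1 p.2), lt_min (by norm_num) (hNpos _ _), min_le_left _ _,
      fun i j => (min_le_right _ _).trans (hp (i, j))⟩
  have hβ0 : 0 < 1 - δ := by linarith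
  have hN0 : N ≠ 0 := by omega
  obtain ⟨α, hα0, hα⟩ : ∃ α : ℝ, 0 ≤ α ∧ α ^ N = 1 - δ :=
    ⟨(1 - δ) ^ ((N : ℝ)⁻¹), by positivity, Real.rpow_inv_natCast_pow hβ0.le hN0⟩
  have hαpos : 0 < α := by
    rcases hα0.eq_or_lt with h | h
    · rw [← h, zero_pow hN0] at hα; linarith
    · exact h
  have hα1 : α < 1 := by
    by_contra h
    have := one_le_pow₀ (n := N) (not_lt.1 h)
    linarith
  have key : ∀ (s t : ℕ) (i : S) (ε : ℝ), 0 ≤ ε → (∀ i j, ε ≤ (P ^ s) i j) →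
      ∑ j, |(P ^ (t + s)) i j - μ j| ≤ (1 - ε) * ∑ j, |(P ^ t) i j - μ j| := by
    intro s t i ε hε hs
    have := aux_contract (P ^ s) ε hε hs (aux_row P hrow s) (fun k => (P ^ t) i k - μ k)
      (by rw [Finset.sum_sub_distrib, aux_row P hrow, hμsum, sub_self])
    simpa only [sub_mul, Finset.sum_sub_distrib, aux_stat P μ hμstat s, ← Matrix.mul_apply,
      ← pow_add] using this
  have h2 : ∀ t i, ∑ j, |(P ^ t) i j - μ j| ≤ 2 := by
    intro t i
    calc ∑ j, |(P ^ t) i j - μ j| ≤ ∑ j, ((P ^ t) i j + μ j) := by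
          refine Finset.sum_le_sum fun j _ => ?_
          have := aux_nonneg P hnonneg t i j
          have := hμnonneg j
          rw [abs_le]; constructor <;> linarith
      _ = 2 := by rw [Finset.sum_add_distrib, aux_row P hrow, hμsum]; norm_num
  refine ⟨α, 1 / (1 - δ), ⟨hαpos, hα1⟩, by positivity, fun t => ?_⟩
  induction t using Nat.strong_induction_on with
  | _ t ih =>
    intro i
    rcases lt_or_ge t N with h | h
    · have h3 : α ^ N ≤ α ^ t := pow_le_pow_of_le_one hα0 hα1.le h.le
      have h4 : 1 ≤ 1 / (1 - δ) * α ^ t := by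
        rw [one_div, ← div_eq_inv_mul, le_div_iff₀ hβ0]; linarith
      have := h2 t i
      linarith
    · obtain ⟨s, rfl⟩ := Nat.exists_eq_add_of_le' h
      have h5 := ih s (by omega) i
      have h6 := key N s i δ hδ0.le hδ
      rw [pow_add α, hα]
      have h7 := mul_le_mul_of_nonneg_left h5 hβ0.le
      linarith
end
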